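/- arXiv:2202.03585 — 4 statements merged into one kernel-verified Lean document; each statement's English description precedes it below -/
import Mathlib

section
/- Let k be an algebraically closed field of characteristic zero and a ∈ k^×. Then T_a is an abelian subgroup of G_{2,a} which equals its own centralizer in G_{2,a}: { g ∈ G_{2,a} : g·t = t·g for all t ∈ T_a } = T_a. In particular T_a is a maximal abelian subgroup of G_{2,a} (so a maximal torus). -/
/-!
Every `[t₁, t₂]` preserves each of the five monomials of `F_a`, since the weights of the three
basis vectors in each multiply to `1`. Conversely, the seven weights of `[2, 8]` are pairwise
distinct in characteristic zero, so a matrix commuting with it is diagonal, say `diag(d₁, …, d₇)`.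
Invariance of `F_a` on basis vectors then gives
`d₁d₄d₇ = d₁d₅d₆ = d₂d₃d₇ = d₂d₄d₆ = d₃d₄d₅ = 1`. The determinant is `d₄` times the second
and third of these products, so `d₄ = 1`, and the remaining relations express every `d_i` through
`d₁` and `d₂`, exactly as in `[d₁, d₂]`.
-/

open Matrix

noncomputable section

/-- `e_i^* ∧ e_j^* ∧ e_l^*` evaluated at `(u, v, w)` on `k^7`. -/
def wedge3 {k : Type*} [CommRing k] (i j l : Fin 7) (u v w : Fin 7 → k) : k :=
  u i * (v j * w l - v l * w j) - u j * (v i * w l - v l * w i) +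
    u l * (v i * w j - v j * w i)

/-- The paper's alternating trilinear form
`F_a = e₁^*∧e₄^*∧e₇^* + e₁^*∧e₅^*∧e₆^* + e₂^*∧e₃^*∧e₇^* − e₂^*∧e₄^*∧e₆^* + a·e₃^*∧e₄^*∧e₅^*`. -/
def Fgen {k : Type*} [CommRing k] (a : k) (u v w : Fin 7 → k) : k :=
  wedge3 0 3 6 u v w + wedge3 0 4 5 u v w + wedge3 1 2 6 u v w -
    wedge3 1 3 5 u v w + a * wedge3 2 3 4 u v w

/-- The group `G_{2,a}`, the determinant-one stabilizer of `F_a` in `GL₇(k)`. -/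
def G2Set {k : Type*} [CommRing k] (a : k) : Set (Matrix (Fin 7) (Fin 7) k) :=
  {g | g.det = 1 ∧ ∀ u v w : Fin 7 → k,
    Fgen a (g.mulVec u) (g.mulVec v) (g.mulVec w) = Fgen a u v w}

/-- The torus element `[t₁, t₂] = diag(t₁, t₂, t₁t₂⁻¹, 1, t₁⁻¹t₂, t₂⁻¹, t₁⁻¹)`. -/
def diagT {k : Type*} [Field k] (t₁ t₂ : k) : Matrix (Fin 7) (Fin 7) k :=
  Matrix.diagonal ![t₁, t₂, t₁ * t₂⁻¹, 1, t₁⁻¹ * t₂, t₂⁻¹, t₁⁻¹]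

/-- The torus `T_a = { [t₁,t₂] : t₁, t₂ ∈ k^× }`. -/
def TaSet {k : Type*} [Field k] : Set (Matrix (Fin 7) (Fin 7) k) :=
  {M | ∃ t₁ t₂ : k, t₁ ≠ 0 ∧ t₂ ≠ 0 ∧ M = diagT t₁ t₂}

theorem diagT_mem_G2Set {k : Type*} [Field k] (a t₁ t₂ : k) (h₁ : t₁ ≠ 0) (h₂ : t₂ ≠ 0) :
    diagT t₁ t₂ ∈ G2Set a := by
  refine ⟨?_, fun u v w => ?_⟩
  · simp only [diagT, Matrix.det_diagonal, Fin.prod_univ_seven]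
    simp
    field_simp
  · simp only [diagT, Fgen, wedge3, Matrix.mulVec_diagonal]
    simp
    field_simp

/-- The weights of `[2, 8]` are `2, 8, 1/4, 1, 4, 1/8, 1/2`, so this single torus element is regular
enough to cut its centralizer down to the diagonal matrices. -/
theorem eq_diagonal_of_commute {k : Type*} [Field k] [CharZero k]
    (g : Matrix (Fin 7) (Fin 7) k) (h : g * diagT 2 8 = diagT 2 8 * g) :
    g = Matrix.diagonal fun i => g i i := by
  have hinj : ∀ i j : Fin 7, i ≠ j →
      (![2, 8, 2 * 8⁻¹, 1, 2⁻¹ * 8, 8⁻¹, 2⁻¹] : Fin 7 → k) j ≠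
        (![2, 8, 2 * 8⁻¹, 1, 2⁻¹ * 8, 8⁻¹, 2⁻¹] : Fin 7 → k) i := by
    intro i j hij
    fin_cases i <;> fin_cases j <;> first | exact absurd rfl hij | (simp <;> norm_num)
  ext i j
  by_cases hij : i = j
  · subst hij
    simp
  · rw [Matrix.diagonal_apply_ne _ hij]
    have e := congrFun (congrFun h i) j
    rw [diagT, Matrix.mul_diagonal, Matrix.diagonal_mul, mul_comm] at e
    by_contra hg
    exact hinj i j hij (mul_right_cancel₀ hg e)

theorem mem_TaSet_of_diagonal {k : Type*} [Field k] (a : k) (ha : a ≠ 0) (d : Fin 7 → k)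
    (h : Matrix.diagonal d ∈ G2Set a) : Matrix.diagonal d ∈ TaSet (k := k) := by
  obtain ⟨hdet, hF⟩ := h
  rw [Matrix.det_diagonal, Fin.prod_univ_seven] at hdet
  have h147 : d 0 * d 3 * d 6 = 1 := by
    have := hF (Pi.single 0 1) (Pi.single 3 1) (Pi.single 6 1)
    simp [Fgen, wedge3, Matrix.mulVec_diagonal] at this
    linear_combination this
  have h156 : d 0 * d 4 * d 5 = 1 := by
    have := hF (Pi.single 0 1) (Pi.single 4 1) (Pi.single 5 1)
    simp [Fgen, wedge3, Matrix.mulVec_diagonal] at this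
    linear_combination this
  have h237 : d 1 * d 2 * d 6 = 1 := by
    have := hF (Pi.single 1 1) (Pi.single 2 1) (Pi.single 6 1)
    simp [Fgen, wedge3, Matrix.mulVec_diagonal] at this
    linear_combination this
  have h246 : d 1 * d 3 * d 5 = 1 := by
    have := hF (Pi.single 1 1) (Pi.single 3 1) (Pi.single 5 1)
    simp [Fgen, wedge3, Matrix.mulVec_diagonal] at this
    linear_combination this
  have h345 : d 2 * d 3 * d 4 = 1 := by
    have := hF (Pi.single 2 1) (Pi.single 3 1) (Pi.single 4 1)
    simp [Fgen, wedge3, Matrix.mulVec_diagonal, ha] at this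
    linear_combination this
  have h3 : d 3 = 1 := by
    linear_combination hdet - d 3 * d 1 * d 2 * d 6 * h156 - d 3 * h237
  rw [h3] at h147 h246 h345
  have n0 : d 0 ≠ 0 := by rintro e; simp [e] at h147
  have n1 : d 1 ≠ 0 := by rintro e; simp [e] at h246
  have h6 : d 6 = (d 0)⁻¹ := eq_inv_of_mul_eq_one_right (by linear_combination h147)
  have h5 : d 5 = (d 1)⁻¹ := eq_inv_of_mul_eq_one_right (by linear_combination h246)
  have h2 : d 2 = d 0 * (d 1)⁻¹ := by
    rw [h6] at h237
    field_simp at h237 ⊢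
    linear_combination h237
  have h4 : d 4 = (d 0)⁻¹ * d 1 := by
    rw [h5] at h156
    field_simp at h156 ⊢
    linear_combination h156
  refine ⟨d 0, d 1, n0, n1, ?_⟩
  rw [diagT]
  congr 1
  ext i
  fin_cases i <;> simp [h2, h3, h4, h5, h6]

/-- Over an algebraically closed field of characteristic zero, `T_a` is an abelian
subgroup of `G_{2,a}` which equals its own centralizer in `G_{2,a}`
(hence is a maximal torus). -/
theorem TaSet_self_centralizing (k : Type*) [Field k] [IsAlgClosed k] [CharZero k]
    (a : k) (ha : a ≠ 0) :
    (TaSet (k := k)) ⊆ G2Set a ∧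
    (∀ s ∈ (TaSet (k := k)), ∀ t ∈ (TaSet (k := k)), s * t = t * s) ∧
    {g | g ∈ G2Set a ∧ ∀ t ∈ (TaSet (k := k)), g * t = t * g} = (TaSet (k := k)) := by
  refine ⟨?_, ?_, ?_⟩
  · rintro _ ⟨t₁, t₂, h₁, h₂, rfl⟩
    exact diagT_mem_G2Set a t₁ t₂ h₁ h₂
  · rintro _ ⟨s₁, s₂, -, -, rfl⟩ _ ⟨t₁, t₂, -, -, rfl⟩
    exact Matrix.commute_diagonal _ _
  · ext g
    constructor
    · rintro ⟨hg, hc⟩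
      have hd := eq_diagonal_of_commute g
        (hc _ ⟨2, 8, by norm_num, by norm_num, rfl⟩)
      rw [hd] at hg ⊢
      exact mem_TaSet_of_diagonal a ha _ hg
    · rintro ⟨t₁, t₂, h₁, h₂, rfl⟩
      refine ⟨diagT_mem_G2Set a t₁ t₂ h₁ h₂, ?_⟩
      rintro _ ⟨s₁, s₂, -, -, rfl⟩
      exact Matrix.commute_diagonal _ _
end
end

section
/- In the symmetric group on {1,...,7}, let σ_α := (2 3)(5 6) and σ_β := (1 2)(3 5)(6 7). Then: (i) the subgroup H generated by σ_α and σ_β has order 12; and (ii) the intersection of H with the subgroup W_{232} := { σ : σ({1,2}) = {1,2}, σ({3,4,5}) = {3,4,5}, σ({6,7}) = {6,7} } equals {identity, σ_β}. -/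
/-!
The product `r = σ_α σ_β` is a 6-cycle fixing one point, both generators are involutions, and `σ_β`
inverts `r` without being a power of it. Hence every element of `⟨σ_α, σ_β⟩` is uniquely
`r ^ i * σ_β ^ j` with `i < 6` and `j < 2` (`mem_closure_iff_mem_dihedralElements`,
`card_dihedralElements`). Among these twelve permutations only `1` and `σ_β` map `0` into
`{0, 1}` and `5` into `{5, 6}` (`eq_one_or_sigmaBeta_of_blocks`), and both preserve
all three blocks.
-/

noncomputable section

/-- The permutation `σ_α = (2 3)(5 6)` of `{1,…,7}` (0-based: `(1 2)(4 5)` on `Fin 7`). -/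
def sigmaAlpha : Equiv.Perm (Fin 7) := Equiv.swap 1 2 * Equiv.swap 4 5

/-- The permutation `σ_β = (1 2)(3 5)(6 7)` of `{1,…,7}` (0-based: `(0 1)(2 4)(5 6)`). -/
def sigmaBeta : Equiv.Perm (Fin 7) := Equiv.swap 0 1 * Equiv.swap 2 4 * Equiv.swap 5 6

/-- The subgroup `W₂₃₂` of permutations stabilizing the blocks `{1,2}`, `{3,4,5}`, `{6,7}`
(0-based: `{0,1}`, `{2,3,4}`, `{5,6}`). -/
def W232perm : Set (Equiv.Perm (Fin 7)) :=
  {σ | (σ : Fin 7 → Fin 7) '' {0, 1} = {0, 1} ∧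
       (σ : Fin 7 → Fin 7) '' {2, 3, 4} = {2, 3, 4} ∧
       (σ : Fin 7 → Fin 7) '' {5, 6} = {5, 6}}

/-- The twelve permutations `(σ_α σ_β) ^ i * σ_β ^ j` with `i < 6` and `j < 2`. -/
def dihedralElements : Finset (Equiv.Perm (Fin 7)) :=
  Finset.univ.image fun p : Fin 6 × Fin 2 =>
    (sigmaAlpha * sigmaBeta) ^ (p.1 : ℕ) * sigmaBeta ^ (p.2 : ℕ)

theorem card_dihedralElements : dihedralElements.card = 12 := by
  decide +kernel

/-- Stability under left multiplication by the generators; as these are involutions, this is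
all that is needed for `dihedralElements` to contain the subgroup they generate. -/
theorem generator_mul_mem_dihedralElements :
    ∀ x ∈ dihedralElements,
      sigmaAlpha * x ∈ dihedralElements ∧ sigmaBeta * x ∈ dihedralElements := by
  simp only [dihedralElements, Finset.forall_mem_image]
  decide +kernel

theorem sigmaAlpha_inv : sigmaAlpha⁻¹ = sigmaAlpha := by
  decide +kernel

theorem sigmaBeta_inv : sigmaBeta⁻¹ = sigmaBeta := by
  decide +kernel

theorem mem_closure_iff_mem_dihedralElements (x : Equiv.Perm (Fin 7)) :
    x ∈ Subgroup.closure {sigmaAlpha, sigmaBeta} ↔ x ∈ dihedralElements := by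
  constructor
  · intro hx
    induction hx using Subgroup.closure_induction_left with
    | one => decide +kernel
    | mul_left g hg y _ ih =>
      rcases hg with rfl | rfl
      · exact (generator_mul_mem_dihedralElements y ih).1
      · exact (generator_mul_mem_dihedralElements y ih).2
    | inv_mul_cancel g hg y _ ih =>
      rcases hg with rfl | rfl
      · rw [sigmaAlpha_inv]
        exact (generator_mul_mem_dihedralElements y ih).1
      · rw [sigmaBeta_inv]
        exact (generator_mul_mem_dihedralElements y ih).2
  · intro hx
    obtain ⟨p, -, rfl⟩ := Finset.mem_image.mp hx
    have hα : sigmaAlpha ∈ Subgroup.closure {sigmaAlpha, sigmaBeta} :=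
      Subgroup.subset_closure (by simp)
    have hβ : sigmaBeta ∈ Subgroup.closure {sigmaAlpha, sigmaBeta} :=
      Subgroup.subset_closure (by simp)
    exact mul_mem (pow_mem (mul_mem hα hβ) _) (pow_mem hβ _)

/-- The images of one point in each of the two outer blocks already single out `1` and `σ_β`
among the twelve elements. -/
theorem eq_one_or_sigmaBeta_of_blocks :
    ∀ x ∈ dihedralElements, (x 0 = 0 ∨ x 0 = 1) → (x 5 = 5 ∨ x 5 = 6) →
      x = 1 ∨ x = sigmaBeta := by
  simp only [dihedralElements, Finset.forall_mem_image]
  decide +kernel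

theorem sigmaBeta_mem_W232perm : sigmaBeta ∈ W232perm := by
  have h : sigmaBeta 0 = 1 ∧ sigmaBeta 1 = 0 ∧ sigmaBeta 2 = 4 ∧ sigmaBeta 3 = 3 ∧
      sigmaBeta 4 = 2 ∧ sigmaBeta 5 = 6 ∧ sigmaBeta 6 = 5 := by
    decide +kernel
  obtain ⟨h0, h1, h2, h3, h4, h5, h6⟩ := h
  refine ⟨?_, ?_, ?_⟩
  · rw [Set.image_pair, h0, h1, Set.pair_comm]
  · rw [Set.image_insert_eq, Set.image_pair, h2, h3, h4]
    ext i
    simp only [Set.mem_insert_iff, Set.mem_singleton_iff]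
    tauto
  · rw [Set.image_pair, h5, h6, Set.pair_comm]

/-- The subgroup of `S₇` generated by `σ_α` and `σ_β` has order `12`, and its intersection
with `W₂₃₂` is `{1, σ_β}`. -/
theorem weyl_in_S7_card_and_intersection :
    Nat.card (Subgroup.closure {sigmaAlpha, sigmaBeta} : Subgroup (Equiv.Perm (Fin 7))) = 12 ∧
    {σ : Equiv.Perm (Fin 7) |
        σ ∈ Subgroup.closure {sigmaAlpha, sigmaBeta} ∧ σ ∈ W232perm} =
      {1, sigmaBeta} := by
  constructor
  · rw [Nat.card_congr (Equiv.subtypeEquivRight mem_closure_iff_mem_dihedralElements),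
      Nat.card_eq_fintype_card, Fintype.card_coe, card_dihedralElements]
  · ext σ
    constructor
    · rintro ⟨hσ, h01, -, h56⟩
      refine eq_one_or_sigmaBeta_of_blocks σ
        ((mem_closure_iff_mem_dihedralElements σ).mp hσ) ?_ ?_
      · have h : σ 0 ∈ (σ : Fin 7 → Fin 7) '' {0, 1} := Set.mem_image_of_mem σ (by simp)
        rw [h01] at h
        exact h
      · have h : σ 5 ∈ (σ : Fin 7 → Fin 7) '' {5, 6} := Set.mem_image_of_mem σ (by simp)
        rw [h56] at h
        exact h
    · rintro (rfl | rfl)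
      · exact ⟨one_mem _, by simp [W232perm]⟩
      · exact ⟨Subgroup.subset_closure (by simp), sigmaBeta_mem_W232perm⟩
end
end

section
/- Let k ≥ 4 be an even integer and let s ∈ ℚ with s ≥ 0. In the ℚ^2 model of the G_2 root lattice, set λ_0 := ((k−4)/2)·(2,3) and σ := s·(2,3) + (0,1) (the slope of the critical p-stabilization Π_F^{(p)}). Then: (1) σ − λ_0 + M_β*λ_0 = s·(2,3), which is a nonnegative rational combination of the positive roots (so the slope σ is critical with respect to λ_0); and (2) if k > 4s + 4, then for every w in the Weyl group W with w ≠ 1 and w ≠ M_β, the vector σ − λ_0 + w*λ_0 is not a nonnegative rational combination of the positive roots — indeed its first coordinate (the coefficient of α) is negative. -/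
/-!
Put `m = (k - 4) / 2`, so that `λ₀ = m (2α + 3β)`, and let `(a, b)` be the first row of `w`. The
`α`-coefficient of `σ - λ₀ + w * λ₀` is `2s - 2m + m (2a + 3b) + (3a + 5b) - 3`, where `2a + 3b`
and `3a + 5b` are the `α`-coefficients of `w (2α + 3β)` and of `w ρ`. For `w ≠ 1, MBeta` the first
is at most `1` and the second at most `3` (`IsWeylMatrix.row_bounds`), so the coefficient is at
most `2s - m`, which is negative when `k > 4s + 4`. The bounds are read off from the explicit list
of the twelve elements of the Weyl group (`isWeylMatrix_of_mem`).
-/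

open Matrix

noncomputable section

/-- The simple reflection `w_α` of the `G₂` Weyl group in the `ℚ²` model
(`α ↦ −α`, `β ↦ α+β`), acting on column vectors `(x,y) = xα + yβ`. -/
def MAlpha : Matrix (Fin 2) (Fin 2) ℚ := !![-1, 1; 0, 1]

/-- The simple reflection `w_β` (`α ↦ α+3β`, `β ↦ −β`). -/
def MBeta : Matrix (Fin 2) (Fin 2) ℚ := !![1, 0; 3, -1]

/-- The Weyl group `W` of `G₂`: the subgroup of `GL₂(ℚ)` generated by `M_α` and `M_β`. -/
def WeylG2 : Subgroup (Matrix (Fin 2) (Fin 2) ℚ)ˣ :=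
  Subgroup.closure {u : (Matrix (Fin 2) (Fin 2) ℚ)ˣ |
    (u : Matrix (Fin 2) (Fin 2) ℚ) = MAlpha ∨ (u : Matrix (Fin 2) (Fin 2) ℚ) = MBeta}

/-- `ρ = 3α + 5β`. -/
def rhoG2 : Fin 2 → ℚ := ![3, 5]

/-- The dot-action `w * λ := w(λ + ρ) − ρ`. -/
def dotAct (w : Matrix (Fin 2) (Fin 2) ℚ) (l : Fin 2 → ℚ) : Fin 2 → ℚ :=
  w.mulVec (l + rhoG2) - rhoG2

/-- The weight `λ₀ = ((k−4)/2)·(2α+3β)`. -/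
def lamZero (k : ℤ) : Fin 2 → ℚ := (((k : ℚ) - 4) / 2) • ![2, 3]

/-- The slope `σ = s·(2α+3β) + β` of the critical `p`-stabilization `Π_F^{(p)}`. -/
def slopeVec (s : ℚ) : Fin 2 → ℚ := s • ![2, 3] + ![0, 1]

/-- `M` is one of `±1, ±A, ±B, ±AB, ±BA, ±ABA`, where `A = MAlpha` and `B = MBeta`. These are
the twelve elements of the Weyl group, since `-1` is its longest element. -/
def IsWeylMatrix (M : Matrix (Fin 2) (Fin 2) ℚ) : Prop :=
  ∃ N : Matrix (Fin 2) (Fin 2) ℚ, (M = N ∨ M = -N) ∧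
    (N = !![1, 0; 0, 1] ∨ N = !![-1, 1; 0, 1] ∨ N = !![1, 0; 3, -1] ∨
      N = !![2, -1; 3, -1] ∨ N = !![-1, 1; -3, 2] ∨ N = !![-2, 1; -3, 2])

lemma MAlpha_mul_self : MAlpha * MAlpha = 1 := by
  simp [MAlpha, Matrix.one_fin_two]

lemma MBeta_mul_self : MBeta * MBeta = 1 := by
  simp [MBeta, Matrix.one_fin_two]

lemma IsWeylMatrix.neg {M : Matrix (Fin 2) (Fin 2) ℚ} (h : IsWeylMatrix M) :
    IsWeylMatrix (-M) := by
  obtain ⟨N, hM | hM, hN⟩ := h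
  · exact ⟨N, Or.inr (by rw [hM]), hN⟩
  · exact ⟨N, Or.inl (by rw [hM, neg_neg]), hN⟩

lemma IsWeylMatrix.alpha_mul {M : Matrix (Fin 2) (Fin 2) ℚ} (h : IsWeylMatrix M) :
    IsWeylMatrix (MAlpha * M) := by
  obtain ⟨N, hM, hN⟩ := h
  have key : IsWeylMatrix (MAlpha * N) := by
    rcases hN with rfl | rfl | rfl | rfl | rfl | rfl <;>
      norm_num [IsWeylMatrix, ← neg_eq_iff_eq_neg, MAlpha]
  rcases hM with rfl | rfl
  · exact key
  · simpa using key.neg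

lemma IsWeylMatrix.beta_mul {M : Matrix (Fin 2) (Fin 2) ℚ} (h : IsWeylMatrix M) :
    IsWeylMatrix (MBeta * M) := by
  obtain ⟨N, hM, hN⟩ := h
  have key : IsWeylMatrix (MBeta * N) := by
    rcases hN with rfl | rfl | rfl | rfl | rfl | rfl <;>
      norm_num [IsWeylMatrix, ← neg_eq_iff_eq_neg, MBeta]
  rcases hM with rfl | rfl
  · exact key
  · simpa using key.neg

lemma isWeylMatrix_of_mem {w : (Matrix (Fin 2) (Fin 2) ℚ)ˣ} (hw : w ∈ WeylG2) :
    IsWeylMatrix (w : Matrix (Fin 2) (Fin 2) ℚ) := by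
  unfold WeylG2 at hw
  induction hw using Subgroup.closure_induction_left with
  | one => exact ⟨1, Or.inl rfl, Or.inl Matrix.one_fin_two⟩
  | mul_left x hx y hy ih =>
    rcases hx with hx | hx
    · simpa [hx] using ih.alpha_mul
    · simpa [hx] using ih.beta_mul
  | inv_mul_cancel x hx y hy ih =>
    -- The generators are involutions, so their inverses bring nothing new.
    rcases hx with hx | hx
    · have hinv : x⁻¹ = x := inv_eq_of_mul_eq_one_left (Units.ext (by simp [hx, MAlpha_mul_self]))
      simpa [hinv, hx] using ih.alpha_mul
    · have hinv : x⁻¹ = x := inv_eq_of_mul_eq_one_left (Units.ext (by simp [hx, MBeta_mul_self]))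
      simpa [hinv, hx] using ih.beta_mul

/-- `1` and `MBeta` are the only Weyl elements fixing the highest root `2α + 3β`; the others send
it to a root with `α`-coefficient at most `1`. They also do not increase the `α`-coefficient `3`
of `ρ`. -/
lemma IsWeylMatrix.row_bounds {M : Matrix (Fin 2) (Fin 2) ℚ} (h : IsWeylMatrix M)
    (h1 : M ≠ 1) (hb : M ≠ MBeta) :
    2 * M 0 0 + 3 * M 0 1 ≤ 1 ∧ 3 * M 0 0 + 5 * M 0 1 ≤ 3 := by
  rw [Matrix.one_fin_two] at h1
  unfold MBeta at hb
  obtain ⟨N, rfl | rfl, rfl | rfl | rfl | rfl | rfl | rfl⟩ := h <;>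
    first
    | exact absurd rfl h1
    | exact absurd rfl hb
    | norm_num

lemma dotAct_apply (M : Matrix (Fin 2) (Fin 2) ℚ) (l : Fin 2 → ℚ) (i : Fin 2) :
    dotAct M l i = M i 0 * (l 0 + rhoG2 0) + M i 1 * (l 1 + rhoG2 1) - rhoG2 i := by
  simp only [dotAct, Pi.sub_apply, Matrix.mulVec, dotProduct, Fin.sum_univ_two, Pi.add_apply]

/-- The slope `σ = s(2α+3β)+β` is critical with respect to `λ₀`:
`σ − λ₀ + w_β*λ₀ = s(2α+3β)`, a nonnegative combination of the positive roots; and if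
`k > 4s+4` then for every other nontrivial Weyl element `w` the vector `σ − λ₀ + w*λ₀`
has negative `α`-coefficient, hence is not a nonnegative combination of positive roots. -/
theorem slope_criticality (k : ℤ) (hk : 4 ≤ k) (hke : Even k) (s : ℚ) (hs : 0 ≤ s) :
    (slopeVec s - lamZero k + dotAct MBeta (lamZero k) = s • ![2, 3] ∧
      ∀ i : Fin 2, 0 ≤ (s • (![2, 3] : Fin 2 → ℚ)) i) ∧
    ((k : ℚ) > 4 * s + 4 →
      ∀ w ∈ WeylG2, (w : Matrix (Fin 2) (Fin 2) ℚ) ≠ 1 →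
        (w : Matrix (Fin 2) (Fin 2) ℚ) ≠ MBeta →
        (slopeVec s - lamZero k +
          dotAct (w : Matrix (Fin 2) (Fin 2) ℚ) (lamZero k)) 0 < 0) := by
  refine ⟨⟨?_, ?_⟩, ?_⟩
  · ext i
    fin_cases i <;>
      simp [slopeVec, lamZero, dotAct_apply, MBeta, rhoG2] <;> ring
  · intro i
    fin_cases i <;> simp <;> linarith
  · intro hks w hw h1 hb
    obtain ⟨hroot, hrho⟩ := (isWeylMatrix_of_mem hw).row_bounds h1 hb
    have hm : 0 ≤ ((k : ℚ) - 4) / 2 := by linarith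
    have hmul := mul_le_mul_of_nonneg_left hroot hm
    simp [slopeVec, lamZero, dotAct_apply, rhoG2]
    linarith
end
end

section
/- In the block-representation situation, suppose there exists g_0 ∈ G with g_{66}(g_0)·g_{67}(g_0)·g_{76}(g_0)·g_{77}(g_0) ≠ 0. Then the coefficients of the invariant trilinear form satisfy a_{147} = a_{156} = a_{237} = −a_{246}. -/
/-!
Every term of the form that involves `v₁` or `v₂` has exactly one index in each of the blocks
`{1, 2}`, `{3, 4, 5}`, `{6, 7}`, so, by the block shape, its values on triples with one basis vector
from each block transform through the three diagonal blocks alone. Write `p, q, r, s` for `g₆₆, g₆₇, g₇₆, g₇₇` at `g₀` and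
`d = ps - qr`. Invariance, multiplied by `d²`, at three basis triples on which the form vanishes gives

* `(v₁, v₃, v₆)`: `p²r² (a₁₄₇ - a₁₅₆ - a₂₃₇ - a₂₄₆) = 0`;
* `(v₁, v₃, v₇)`: `pr (ps (a₁₄₇ - a₂₃₇) - qr (a₁₅₆ + a₂₄₆)) = 0`;
* `(v₂, v₃, v₆)`: `pr (ps (a₂₃₇ + a₂₄₆) - qr (a₁₄₇ - a₁₅₆)) = 0`.

The first relation turns the other two into `prd (a₁₄₇ - a₂₃₇) = 0` and `prd (a₁₄₇ - a₁₅₆) = 0`.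
Since `p`, `r`, `d` are nonzero, all the equalities follow.
-/

open Matrix

noncomputable section

/-- The alternating trilinear form
`a₁₄₇ v₁^*∧v₄^*∧v₇^* + a₁₅₆ v₁^*∧v₅^*∧v₆^* + a₂₃₇ v₂^*∧v₃^*∧v₇^* + a₂₄₆ v₂^*∧v₄^*∧v₆^* + a₃₄₅ v₃^*∧v₄^*∧v₅^*`. -/
def triForm {k : Type*} [CommRing k] (a₁₄₇ a₁₅₆ a₂₃₇ a₂₄₆ a₃₄₅ : k)
    (u v w : Fin 7 → k) : k :=
  a₁₄₇ * wedge3 0 3 6 u v w + a₁₅₆ * wedge3 0 4 5 u v w +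
    a₂₃₇ * wedge3 1 2 6 u v w + a₂₄₆ * wedge3 1 3 5 u v w +
    a₃₄₅ * wedge3 2 3 4 u v w

/-- `d(g) = g₆₆g₇₇ − g₆₇g₇₆` (0-based entries). -/
def dLow {k : Type*} [CommRing k] (M : Matrix (Fin 7) (Fin 7) k) : k :=
  M 5 5 * M 6 6 - M 5 6 * M 6 5

/-- The value of the form on a triple of columns taken one from each block of a block upper
triangular matrix: only the entries of the diagonal blocks occur. -/
lemma triForm_blocks {k : Type*} [CommRing k] (a₁₄₇ a₁₅₆ a₂₃₇ a₂₄₆ a₃₄₅ : k)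
    (u v w : Fin 7 → k) (hu2 : u 2 = 0) (hu3 : u 3 = 0) (hu4 : u 4 = 0) (hu5 : u 5 = 0)
    (hu6 : u 6 = 0) (hv5 : v 5 = 0) (hv6 : v 6 = 0) :
    triForm a₁₄₇ a₁₅₆ a₂₃₇ a₂₄₆ a₃₄₅ u v w =
      a₁₄₇ * (u 0 * v 3 * w 6) + a₁₅₆ * (u 0 * v 4 * w 5) +
        a₂₃₇ * (u 1 * v 2 * w 6) + a₂₄₆ * (u 1 * v 3 * w 5) := by
  simp only [triForm, wedge3, hu2, hu3, hu4, hu5, hu6, hv5, hv6]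
  ring

/-- In the block-representation situation, if some `g₀` has
`g₆₆g₆₇g₇₆g₇₇ ≠ 0`, then `a₁₄₇ = a₁₅₆ = a₂₃₇ = −a₂₄₆`. -/
theorem triForm_coeffs_equal {k : Type*} [Field k] [CharZero k]
    {G : Type*} [Group G] (ρ : G →* Matrix (Fin 7) (Fin 7) k)
    (hblock : ∀ g : G, ∀ i j : Fin 7,
      ((2 ≤ (i : ℕ) ∧ (j : ℕ) ≤ 1) ∨ (5 ≤ (i : ℕ) ∧ 2 ≤ (j : ℕ) ∧ (j : ℕ) ≤ 4)) →
      ρ g i j = 0)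
    (hρ1 : ∀ g : G,
      dLow (ρ g) * ρ g 0 0 = ρ g 5 5 ∧
      dLow (ρ g) * ρ g 0 1 = -ρ g 5 6 ∧
      dLow (ρ g) * ρ g 1 0 = -ρ g 6 5 ∧
      dLow (ρ g) * ρ g 1 1 = ρ g 6 6)
    (hρ2 : ∀ g : G,
      dLow (ρ g) * ρ g 2 2 = ρ g 5 5 ^ 2 ∧
      dLow (ρ g) * ρ g 2 3 = 2 * (ρ g 5 5 * ρ g 5 6) ∧
      dLow (ρ g) * ρ g 2 4 = -(ρ g 5 6 ^ 2) ∧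
      dLow (ρ g) * ρ g 3 2 = ρ g 5 5 * ρ g 6 5 ∧
      dLow (ρ g) * ρ g 3 3 = ρ g 5 5 * ρ g 6 6 + ρ g 5 6 * ρ g 6 5 ∧
      dLow (ρ g) * ρ g 3 4 = -(ρ g 5 6 * ρ g 6 6) ∧
      dLow (ρ g) * ρ g 4 2 = -(ρ g 6 5 ^ 2) ∧
      dLow (ρ g) * ρ g 4 3 = -(2 * (ρ g 6 5 * ρ g 6 6)) ∧
      dLow (ρ g) * ρ g 4 4 = ρ g 6 6 ^ 2)
    (a₁₄₇ a₁₅₆ a₂₃₇ a₂₄₆ a₃₄₅ : k)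
    (hform : ∀ (g : G) (u v w : Fin 7 → k),
      triForm a₁₄₇ a₁₅₆ a₂₃₇ a₂₄₆ a₃₄₅
          ((ρ g).mulVec u) ((ρ g).mulVec v) ((ρ g).mulVec w) =
        triForm a₁₄₇ a₁₅₆ a₂₃₇ a₂₄₆ a₃₄₅ u v w)
    (g₀ : G) (hg₀ : ρ g₀ 5 5 * ρ g₀ 5 6 * ρ g₀ 6 5 * ρ g₀ 6 6 ≠ 0) :
    a₁₄₇ = a₁₅₆ ∧ a₁₅₆ = a₂₃₇ ∧ a₂₃₇ = -a₂₄₆ := by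
  have hp : ρ g₀ 5 5 ≠ 0 := fun h => hg₀ (by simp [h])
  have hr : ρ g₀ 6 5 ≠ 0 := fun h => hg₀ (by simp [h])
  obtain ⟨h00, h01, h10, h11⟩ := hρ1 g₀
  obtain ⟨h22, -, -, h32, -, -, h42, -, -⟩ := hρ2 g₀
  have hd : dLow (ρ g₀) ≠ 0 := fun h => hp (by rw [← h00, h, zero_mul])
  have hdef : dLow (ρ g₀) = ρ g₀ 5 5 * ρ g₀ 6 6 - ρ g₀ 5 6 * ρ g₀ 6 5 := rfl
  -- Invariance on a triple `(v_i, v_3, v_l)` with `i ∈ {1, 2}`, `l ∈ {6, 7}`.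
  have key : ∀ i l : Fin 7, (i : ℕ) ≤ 1 → 5 ≤ (l : ℕ) →
      a₁₄₇ * (ρ g₀ 0 i * ρ g₀ 3 2 * ρ g₀ 6 l) + a₁₅₆ * (ρ g₀ 0 i * ρ g₀ 4 2 * ρ g₀ 5 l) +
        a₂₃₇ * (ρ g₀ 1 i * ρ g₀ 2 2 * ρ g₀ 6 l) + a₂₄₆ * (ρ g₀ 1 i * ρ g₀ 3 2 * ρ g₀ 5 l) =
      triForm a₁₄₇ a₁₅₆ a₂₃₇ a₂₄₆ a₃₄₅ (Pi.single i 1) (Pi.single 2 1) (Pi.single l 1) := by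
    intro i l hi hl
    rw [← hform g₀]
    simp only [mulVec_single_one]
    rw [triForm_blocks]
    · rfl
    all_goals
      refine hblock g₀ _ _ ?_
      first
        | exact Or.inl ⟨by decide, hi⟩
        | exact Or.inr (by decide)
  have k05 := key 0 5 (by decide) (by decide)
  have k06 := key 0 6 (by decide) (by decide)
  have k15 := key 1 5 (by decide) (by decide)
  simp only [triForm, wedge3, Pi.single_apply, Fin.isValue, Fin.reduceEq, if_true, if_false, mul_zero,
    zero_mul, sub_zero, add_zero] at k05 k06 k15
  generalize dLow (ρ g₀) = d at *
  generalize ρ g₀ 5 5 = p at *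
  generalize ρ g₀ 5 6 = q at *
  generalize ρ g₀ 6 5 = r at *
  generalize ρ g₀ 6 6 = s at *
  have e1 : a₁₄₇ - a₁₅₆ - a₂₃₇ - a₂₄₆ = 0 := by
    have : p ^ 2 * r ^ 2 * (a₁₄₇ - a₁₅₆ - a₂₃₇ - a₂₄₆) = 0 := by
      have E : a₁₄₇ * ((d * ρ g₀ 0 0) * (d * ρ g₀ 3 2) * r) +
          a₁₅₆ * ((d * ρ g₀ 0 0) * (d * ρ g₀ 4 2) * p) +
          a₂₃₇ * ((d * ρ g₀ 1 0) * (d * ρ g₀ 2 2) * r) +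
          a₂₄₆ * ((d * ρ g₀ 1 0) * (d * ρ g₀ 3 2) * p) = 0 := by
        linear_combination d ^ 2 * k05
      rw [h00, h10, h22, h32, h42] at E
      linear_combination E
    simpa [hp, hr] using this
  have e2 : a₁₄₇ - a₂₃₇ = 0 := by
    have : p * r * d * (a₁₄₇ - a₂₃₇) = 0 := by
      have E : a₁₄₇ * ((d * ρ g₀ 0 0) * (d * ρ g₀ 3 2) * s) +
          a₁₅₆ * ((d * ρ g₀ 0 0) * (d * ρ g₀ 4 2) * q) +
          a₂₃₇ * ((d * ρ g₀ 1 0) * (d * ρ g₀ 2 2) * s) +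
          a₂₄₆ * ((d * ρ g₀ 1 0) * (d * ρ g₀ 3 2) * q) = 0 := by
        linear_combination d ^ 2 * k06
      rw [h00, h10, h22, h32, h42] at E
      rw [hdef]
      linear_combination E - p * q * r ^ 2 * e1
    simpa [hp, hr, hd] using this
  have e3 : a₁₄₇ - a₁₅₆ = 0 := by
    have : p * r * d * (a₁₄₇ - a₁₅₆) = 0 := by
      have E : a₁₄₇ * ((d * ρ g₀ 0 1) * (d * ρ g₀ 3 2) * r) +
          a₁₅₆ * ((d * ρ g₀ 0 1) * (d * ρ g₀ 4 2) * p) +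
          a₂₃₇ * ((d * ρ g₀ 1 1) * (d * ρ g₀ 2 2) * r) +
          a₂₄₆ * ((d * ρ g₀ 1 1) * (d * ρ g₀ 3 2) * p) = 0 := by
        linear_combination d ^ 2 * k15
      rw [h01, h11, h22, h32, h42] at E
      rw [hdef]
      linear_combination E + p ^ 2 * r * s * e1
    simpa [hp, hr, hd] using this
  exact ⟨by linear_combination e3, by linear_combination e2 - e3, by linear_combination e3 - e1⟩
end
end
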